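/- Let m ∈ ℝ and t ∈ [0,1]. For j, k ∈ ℤ set f^t_{jk} := f(tj + (1-t)k), and for a ∈ S^m_f(ℝ^{2n}) define a^t_{jk}(q, p, q') := ψ_j(r) ψ_k(r') a( tr + (1-t)r', (f^t_{jk})^{-1}(tθ + (1-t)θ'), ρ, f^t_{jk} η ), for q = (r,θ), q' = (r',θ'), p = (ρ,η). Then for all multiindices α, β, γ ∈ ℕⁿ there exist C > 0 and N' ∈ ℕ such that |∂_q^α ∂_p^β ∂_{q'}^γ a^t_{jk}(q, p, q')| ≤ C |a|_{S^m_f, N'} ⟨p⟩^{m - |β|} for all (q, p, q') ∈ ℝ^{3n}, all j, k ∈ ℤ, all t ∈ [0,1] and all a ∈ S^m_f(ℝ^{2n}). -/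

import Mathlib

open MeasureTheory Finset

noncomputable section

/-- Points of `ℝⁿ` (with `n = d + 1`) split as `q = (r, θ) ∈ ℝ × ℝ^d`. -/
abbrev Q (d : ℕ) : Type := ℝ × (Fin d → ℝ)

/-- The coordinate direction `∂_r`. -/
def eR (d : ℕ) : Q d := ((1 : ℝ), 0)

/-- The coordinate direction `∂_{θ_i}`. -/
def eTh (d : ℕ) (i : Fin d) : Q d := ((0 : ℝ), Pi.single i 1)

/-- Directional derivative of a complex-valued function. -/
def dirD {E : Type*} [NormedAddCommGroup E] [NormedSpace ℝ E]
    (v : E) (g : E → ℂ) : E → ℂ :=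
  fun x => fderiv ℝ g x v

/-- Multiindices `α = (α₀, α')` split as in the paper. -/
abbrev MIdx (d : ℕ) : Type := ℕ × (Fin d → ℕ)

/-- `|α| = α₀ + |α'|`. -/
def deg {d : ℕ} (α : MIdx d) : ℕ := α.1 + ∑ i, α.2 i

/-- `|α'|`, the angular part of a multiindex. -/
def degA {d : ℕ} (α : MIdx d) : ℕ := ∑ i, α.2 i

/-- `∂_q^α` acting on functions on `ℝⁿ = ℝ × ℝ^d`. -/
def mderiv1 {d : ℕ} (α : MIdx d) (g : Q d → ℂ) : Q d → ℂ :=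
  (dirD (eR d))^[α.1] <|
    (List.finRange d).foldr (fun i h => (dirD (eTh d i))^[α.2 i] h) g

/-- `∂_q^α ∂_p^β` acting on functions on phase space. -/
def mderiv2 {d : ℕ} (α β : MIdx d) (g : Q d × Q d → ℂ) : Q d × Q d → ℂ :=
  (dirD ((eR d, 0) : Q d × Q d))^[α.1] <|
  (List.finRange d).foldr (fun i h => (dirD ((eTh d i, 0) : Q d × Q d))^[α.2 i] h) <|
  (dirD (((0 : Q d), eR d) : Q d × Q d))^[β.1] <|
  (List.finRange d).foldr (fun i h => (dirD (((0 : Q d), eTh d i) : Q d × Q d))^[β.2 i] h) g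

/-- `∂_q^α ∂_p^β ∂_{q'}^γ` acting on amplitudes `a(q, p, q')`. -/
def mderiv3 {d : ℕ} (α β γ : MIdx d) (g : Q d × Q d × Q d → ℂ) : Q d × Q d × Q d → ℂ :=
  (dirD ((eR d, 0, 0) : Q d × Q d × Q d))^[α.1] <|
  (List.finRange d).foldr (fun i h => (dirD ((eTh d i, 0, 0) : Q d × Q d × Q d))^[α.2 i] h) <|
  (dirD (((0 : Q d), eR d, 0) : Q d × Q d × Q d))^[β.1] <|
  (List.finRange d).foldr (fun i h => (dirD (((0 : Q d), eTh d i, 0) : Q d × Q d × Q d))^[β.2 i] h) <|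
  (dirD (((0 : Q d), (0 : Q d), eR d) : Q d × Q d × Q d))^[γ.1] <|
  (List.finRange d).foldr (fun i h => (dirD (((0 : Q d), (0 : Q d), eTh d i) : Q d × Q d × Q d))^[γ.2 i] h) g

/-- `⟨p⟩ = (1 + ρ² + |η|²)^{1/2}`. -/
def brP {d : ℕ} (p : Q d) : ℝ := Real.sqrt (1 + p.1 ^ 2 + ∑ i, (p.2 i) ^ 2)

/-- `⟨ρ ⊕ f(r)⁻¹ η⟩` evaluated at a phase-space point. -/
def brF {d : ℕ} (f : ℝ → ℝ) (x : Q d × Q d) : ℝ :=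
  Real.sqrt (1 + x.2.1 ^ 2 + ∑ i, (x.2.2 i / f x.1.1) ^ 2)

/-- The standing assumption on `f : ℝ → [1, ∞)`: smooth, `f ≥ 1`, and all derivatives
of `log f` of order `≥ 1` are bounded. -/
def GoodF (f : ℝ → ℝ) : Prop :=
  ContDiff ℝ (⊤ : ℕ∞) f ∧ (∀ r, 1 ≤ f r) ∧
    ∀ j : ℕ, 1 ≤ j → ∃ C : ℝ, ∀ r, |iteratedDeriv j (fun s => Real.log (f s)) r| ≤ C

/-- Membership in the symbol class `S^m_f(ℝ^{2n})`. -/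
def IsSymbol {d : ℕ} (f : ℝ → ℝ) (m : ℝ) (a : Q d × Q d → ℂ) : Prop :=
  ContDiff ℝ (⊤ : ℕ∞) a ∧
    ∀ α β : MIdx d, ∃ C : ℝ, ∀ x : Q d × Q d,
      ‖mderiv2 α β a x‖ ≤ C * f x.1.1 ^ ((degA α : ℝ) - (degA β : ℝ)) * brF f x ^ (m - (deg β : ℝ))

/-- The finite set of multiindices of length `≤ N`. -/
def idxSet (d N : ℕ) : Finset (MIdx d) :=
  ((Finset.range (N + 1)) ×ˢ Fintype.piFinset fun _ : Fin d => Finset.range (N + 1)).filter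
    fun α => deg α ≤ N

/-- The seminorm `|a|_{S^m_f, N}`. -/
def symNorm {d : ℕ} (f : ℝ → ℝ) (m : ℝ) (N : ℕ) (a : Q d × Q d → ℂ) : ℝ :=
  ∑ α ∈ idxSet d N, ∑ β ∈ idxSet d N,
    if deg α + deg β ≤ N then
      ⨆ x : Q d × Q d,
        f x.1.1 ^ (-(degA α : ℝ) + (degA β : ℝ)) * brF f x ^ (-m + (deg β : ℝ)) *
          ‖mderiv2 α β a x‖
    else 0

/-- `p · q`. -/
def qdot {d : ℕ} (p q : Q d) : ℝ := p.1 * q.1 + ∑ i, p.2 i * q.2 i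

/-- The oscillating factor `e^{i p · v / ℏ}`. -/
def ephase {d : ℕ} (ℏ : ℝ) (p v : Q d) : ℂ :=
  Complex.exp (Complex.I * Complex.ofReal (qdot p v) / Complex.ofReal ℏ)

/-- The quantization `Op^t_ℏ(a)` of a symbol, acting on functions (trivialized half-densities). -/
def Op {d : ℕ} (ℏ t : ℝ) (a : Q d × Q d → ℂ) (u : Q d → ℂ) : Q d → ℂ :=
  fun q => ((2 * Real.pi * ℏ) ^ (d + 1) : ℝ)⁻¹ •
    ∫ p : Q d, ∫ q' : Q d,
      a (t • q + (1 - t) • q', p) * ephase ℏ p (q - q') * u q'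

/-- Membership in `C_c^∞(ℝⁿ)`. -/
def IsCc {d : ℕ} (u : Q d → ℂ) : Prop := ContDiff ℝ (⊤ : ℕ∞) u ∧ HasCompactSupport u

/-- The `L²` inner product `⟨w, v⟩ = ∫ w \bar v`. -/
def l2inner {d : ℕ} (w v : Q d → ℂ) : ℂ := ∫ q : Q d, w q * (starRingEnd ℂ) (v q)

/-- The `L²` norm. -/
def l2norm {d : ℕ} (u : Q d → ℂ) : ℝ := (∫ q : Q d, ‖u q‖ ^ 2) ^ (1 / 2 : ℝ)

/-- `Σ_{|β| ≤ N} sup |∂^β u|`. -/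
def ckNorm {d : ℕ} (N : ℕ) (u : Q d → ℂ) : ℝ :=
  ∑ β ∈ idxSet d N, ⨆ q : Q d, ‖mderiv1 β u q‖

/-- `⟨ρ ⊕ f(tr + (1-t)r')⁻¹ η⟩` evaluated at a point `(q, p, q')`. -/
def brFA {d : ℕ} (f : ℝ → ℝ) (t : ℝ) (x : Q d × Q d × Q d) : ℝ :=
  Real.sqrt (1 + x.2.1.1 ^ 2 + ∑ i, (x.2.1.2 i / f (t * x.1.1 + (1 - t) * x.2.2.1)) ^ 2)

/-- Membership in the amplitude class `BS^m_{f,t}(ℝ^{3n})`. -/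
def IsAmp {d : ℕ} (f : ℝ → ℝ) (m t : ℝ) (a : Q d × Q d × Q d → ℂ) : Prop :=
  ContDiff ℝ (⊤ : ℕ∞) a ∧
    ∀ α β γ : MIdx d, ∃ C : ℝ, ∀ x : Q d × Q d × Q d,
      ‖mderiv3 α β γ a x‖ ≤
        C * f (t * x.1.1 + (1 - t) * x.2.2.1) ^ ((degA α : ℝ) - (degA β : ℝ) + (degA γ : ℝ)) *
          brFA f t x ^ (m - (deg β : ℝ))

/-- The seminorm `|a|_{BS^m_{f,t}, N}`. -/
def ampNorm {d : ℕ} (f : ℝ → ℝ) (m t : ℝ) (N : ℕ) (a : Q d × Q d × Q d → ℂ) : ℝ :=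
  ∑ α ∈ idxSet d N, ∑ β ∈ idxSet d N, ∑ γ ∈ idxSet d N,
    if deg α + deg β + deg γ ≤ N then
      ⨆ x : Q d × Q d × Q d,
        f (t * x.1.1 + (1 - t) * x.2.2.1) ^ (-(degA α : ℝ) + (degA β : ℝ) - (degA γ : ℝ)) *
          brFA f t x ^ (-m + (deg β : ℝ)) * ‖mderiv3 α β γ a x‖
    else 0

/-- The quantization of an amplitude `a(q, p, q')`. -/
def OpAmp {d : ℕ} (ℏ : ℝ) (a : Q d × Q d × Q d → ℂ) (u : Q d → ℂ) : Q d → ℂ :=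
  fun q => ((2 * Real.pi * ℏ) ^ (d + 1) : ℝ)⁻¹ •
    ∫ p : Q d, ∫ q' : Q d, a (q, p, q') * ephase ℏ p (q - q') * u q'


/-- The rescaled localized amplitude `a^t_{jk}` of Lemma 2.11. -/
def scaledAmp (d : ℕ) (f : ℝ → ℝ) (ψ : ℝ → ℝ) (t : ℝ) (j k : ℤ)
    (a : Q d × Q d → ℂ) : Q d × Q d × Q d → ℂ :=
  fun x =>
    Complex.ofReal (ψ (x.1.1 - (j : ℝ))) * Complex.ofReal (ψ (x.2.2.1 - (k : ℝ))) *
      a ((t * x.1.1 + (1 - t) * x.2.2.1,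
            (f (t * (j : ℝ) + (1 - t) * (k : ℝ)))⁻¹ • (t • x.1.2 + (1 - t) • x.2.2.2)),
         (x.2.1.1, f (t * (j : ℝ) + (1 - t) * (k : ℝ)) • x.2.1.2))

/-!
Since `log f` is Lipschitz, `f` varies by at most a bounded factor over bounded distances. On the
support of `ψ_j(r) ψ_k(r')` the point `t r + (1 - t) r'` stays within a bounded distance of
`t j + (1 - t) k`, so there `F = f^t_{jk}` is comparable to the value of `f` that governs the
symbol estimates. The amplitude is the product of this cutoff and of the pullback of `a` under a
linear map which turns each coordinate derivative into a bounded multiple of `1`, `F` or `F⁻¹`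
times a coordinate derivative of `a`. These powers of `F` cancel the powers of `f` in the symbol
estimates up to bounded factors, and the bracket `⟨ρ ⊕ f⁻¹ F η⟩` is comparable to `⟨p⟩`. The
Leibniz rule combines the two factors; as the cutoff does not depend on `p`, all `|β|` momentum
derivatives fall on `a` and gain `⟨p⟩^{-|β|}`.
-/

section IterDirD

variable {E F : Type*} [NormedAddCommGroup E] [NormedSpace ℝ E]
  [NormedAddCommGroup F] [NormedSpace ℝ F]

/-- The iterated directional derivative `∂_{v₁} ⋯ ∂_{vₙ} g` along a list `[v₁, …, vₙ]` of
directions; the last direction is differentiated first. -/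
def iterDirD (l : List E) (g : E → ℂ) : E → ℂ := l.foldr dirD g

@[simp]
lemma iterDirD_nil (g : E → ℂ) : iterDirD [] g = g := rfl

@[simp]
lemma iterDirD_cons (v : E) (l : List E) (g : E → ℂ) :
    iterDirD (v :: l) g = dirD v (iterDirD l g) := rfl

lemma iterDirD_append (l l' : List E) (g : E → ℂ) :
    iterDirD (l ++ l') g = iterDirD l (iterDirD l' g) := List.foldr_append

lemma iterDirD_replicate (n : ℕ) (v : E) (g : E → ℂ) :
    iterDirD (List.replicate n v) g = (dirD v)^[n] g := by
  induction n with
  | zero => rfl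
  | succ n ih => rw [List.replicate_succ, iterDirD_cons, ih, Function.iterate_succ_apply']

lemma contDiff_dirD (v : E) {g : E → ℂ} (hg : ContDiff ℝ (⊤ : ℕ∞) g) :
    ContDiff ℝ (⊤ : ℕ∞) (dirD v g) :=
  (hg.fderiv_right (m := (⊤ : ℕ∞)) (by simp)).clm_apply contDiff_const

lemma contDiff_iterDirD (l : List E) {g : E → ℂ} (hg : ContDiff ℝ (⊤ : ℕ∞) g) :
    ContDiff ℝ (⊤ : ℕ∞) (iterDirD l g) := by
  induction l with
  | nil => exact hg
  | cons v l ih => exact contDiff_dirD v ih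

lemma dirD_comm (v w : E) {g : E → ℂ} (hg : ContDiff ℝ (⊤ : ℕ∞) g) :
    dirD v (dirD w g) = dirD w (dirD v g) := by
  have hdiff : Differentiable ℝ (fderiv ℝ g) :=
    (hg.fderiv_right (m := (⊤ : ℕ∞)) (by simp)).differentiable (by simp)
  have dirD_dirD (v w x : E) : dirD v (dirD w g) x = fderiv ℝ (fderiv ℝ g) x v w := by
    change fderiv ℝ (fun y => fderiv ℝ g y w) x v = _
    rw [fderiv_clm_apply (hdiff x) (differentiableAt_const w)]
    simp
  have hsymm (x : E) : IsSymmSndFDerivAt ℝ g x :=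
    hg.contDiffAt.isSymmSndFDerivAt
      (by simpa using WithTop.coe_le_coe.2 (le_top : (2 : ℕ∞) ≤ ⊤))
  funext x
  rw [dirD_dirD, dirD_dirD, hsymm x v w]

lemma iterDirD_perm {l l' : List E} (h : l.Perm l') {g : E → ℂ}
    (hg : ContDiff ℝ (⊤ : ℕ∞) g) : iterDirD l g = iterDirD l' g := by
  induction h with
  | nil => rfl
  | cons v _ ih => rw [iterDirD_cons, iterDirD_cons, ih]
  | swap v w l => exact dirD_comm w v (contDiff_iterDirD l hg)
  | trans _ _ ih ih' => exact ih.trans ih'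

lemma iterDirD_cons_eq_iterDirD_dirD (v : E) (l : List E) {g : E → ℂ}
    (hg : ContDiff ℝ (⊤ : ℕ∞) g) : iterDirD (v :: l) g = iterDirD l (dirD v g) := by
  rw [iterDirD_perm (List.perm_append_singleton v l).symm hg, iterDirD_append]
  rfl

lemma dirD_add (v : E) {g h : E → ℂ} (hg : ContDiff ℝ (⊤ : ℕ∞) g)
    (hh : ContDiff ℝ (⊤ : ℕ∞) h) : dirD v (g + h) = dirD v g + dirD v h := by
  funext x
  simp only [dirD]
  rw [fderiv_add (hg.differentiable (by simp) x) (hh.differentiable (by simp) x)]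
  rfl

lemma iterDirD_add (l : List E) {g h : E → ℂ} (hg : ContDiff ℝ (⊤ : ℕ∞) g)
    (hh : ContDiff ℝ (⊤ : ℕ∞) h) : iterDirD l (g + h) = iterDirD l g + iterDirD l h := by
  induction l with
  | nil => rfl
  | cons v l ih =>
    simp only [iterDirD_cons, ih, dirD_add v (contDiff_iterDirD l hg) (contDiff_iterDirD l hh)]

lemma dirD_mul (v : E) {g h : E → ℂ} (hg : ContDiff ℝ (⊤ : ℕ∞) g)
    (hh : ContDiff ℝ (⊤ : ℕ∞) h) : dirD v (g * h) = dirD v g * h + g * dirD v h := by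
  funext x
  simp only [dirD, Pi.add_apply, Pi.mul_apply]
  rw [fderiv_mul (hg.differentiable (by simp) x) (hh.differentiable (by simp) x)]
  simp only [add_apply, smul_apply, smul_eq_mul]
  ring

/-- The Leibniz rule distributes the `n` directions over the two factors in `2 ^ n` ways. -/
lemma norm_iterDirD_mul_le {ι : Type*} (e : ι → E) {l : List ι} {g h : E → ℂ}
    (hg : ContDiff ℝ (⊤ : ℕ∞) g) (hh : ContDiff ℝ (⊤ : ℕ∞) h) {x : E} {B : ℝ}
    (hB : ∀ l₁ l₂ : List ι, (l₁ ++ l₂).Perm l →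
      ‖iterDirD (l₁.map e) g x‖ * ‖iterDirD (l₂.map e) h x‖ ≤ B) :
    ‖iterDirD (l.map e) (g * h) x‖ ≤ 2 ^ l.length * B := by
  induction l generalizing g h with
  | nil => simpa using hB [] [] (List.Perm.refl [])
  | cons i l ih =>
    have hg' := contDiff_dirD (e i) hg
    have hh' := contDiff_dirD (e i) hh
    have hleft : ‖iterDirD (l.map e) (dirD (e i) g * h) x‖ ≤ 2 ^ l.length * B :=
      ih hg' hh fun l₁ l₂ hl => by
        rw [← iterDirD_cons_eq_iterDirD_dirD (e i) (l₁.map e) hg]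
        exact hB (i :: l₁) l₂ (hl.cons i)
    have hright : ‖iterDirD (l.map e) (g * dirD (e i) h) x‖ ≤ 2 ^ l.length * B :=
      ih hg hh' fun l₁ l₂ hl => by
        rw [← iterDirD_cons_eq_iterDirD_dirD (e i) (l₂.map e) hh]
        exact hB l₁ (i :: l₂) (List.perm_middle.trans (hl.cons i))
    have hsplit : iterDirD ((i :: l).map e) (g * h) =
        iterDirD (l.map e) (dirD (e i) g * h) + iterDirD (l.map e) (g * dirD (e i) h) := by
      rw [List.map_cons, iterDirD_cons_eq_iterDirD_dirD (e i) (l.map e) (g := g * h) (hg.mul hh),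
        dirD_mul (e i) hg hh]
      exact iterDirD_add (l.map e) (hg'.mul hh) (hg.mul hh')
    rw [hsplit, List.length_cons]
    calc ‖iterDirD (l.map e) (dirD (e i) g * h) x + iterDirD (l.map e) (g * dirD (e i) h) x‖
        ≤ 2 ^ l.length * B + 2 ^ l.length * B := norm_add_le_of_le hleft hright
      _ = 2 ^ (l.length + 1) * B := by ring

lemma iterDirD_comp_clm_add (L : E →L[ℝ] F) (c : F) (l : List E) {g : F → ℂ}
    (hg : ContDiff ℝ (⊤ : ℕ∞) g) :
    iterDirD l (fun x => g (L x + c)) = fun x => iterDirD (l.map L) g (L x + c) := by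
  induction l with
  | nil => rfl
  | cons v l ih =>
    funext x
    have hdiff := (contDiff_iterDirD (l.map L) hg).differentiable (by simp) (L x + c)
    have hchain := hdiff.hasFDerivAt.comp x (L.hasFDerivAt.add_const c)
    rw [iterDirD_cons, ih]
    exact congrArg (· v) hchain.fderiv

lemma dirD_const_smul (v : E) (c : ℝ) {g : E → ℂ} (hg : ContDiff ℝ (⊤ : ℕ∞) g) :
    dirD v (c • g) = c • dirD v g := by
  funext x
  simp only [dirD]
  rw [fderiv_const_smul (hg.differentiable (by simp) x)]
  rfl

lemma iterDirD_map_smul {ι : Type*} (c : ι → ℝ) (e : ι → E) (l : List ι) {g : E → ℂ}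
    (hg : ContDiff ℝ (⊤ : ℕ∞) g) :
    iterDirD (l.map fun i => c i • e i) g = (l.map c).prod • iterDirD (l.map e) g := by
  induction l with
  | nil => simp
  | cons i l ih =>
    simp only [List.map_cons, List.prod_cons, iterDirD_cons, ih]
    rw [dirD_const_smul _ _ (contDiff_iterDirD _ hg), mul_comm, mul_smul]
    funext x
    simp only [dirD, map_smul, Pi.smul_apply]

lemma iterDirD_eq_iteratedFDeriv (l : List E) {g : E → ℂ} (hg : ContDiff ℝ (⊤ : ℕ∞) g) :
    iterDirD l g = fun x => iteratedFDeriv ℝ l.length g x l.get := by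
  induction l with
  | nil => rfl
  | cons v l ih =>
    funext x
    have hdiff : DifferentiableAt ℝ (iteratedFDeriv ℝ l.length g) x :=
      hg.differentiable_iteratedFDeriv (WithTop.coe_lt_coe.2 (ENat.natCast_lt_top _)) x
    rw [iterDirD_cons, ih]
    exact (hdiff.iteratedFDeriv_succ_apply_left' (m := (v :: l).get)).symm

lemma iterDirD_eq_zero_of_zero_mem {l : List E} (h : (0 : E) ∈ l) {g : E → ℂ}
    (hg : ContDiff ℝ (⊤ : ℕ∞) g) : iterDirD l g = 0 := by
  obtain ⟨i, hi⟩ := List.get_of_mem h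
  funext x
  rw [iterDirD_eq_iteratedFDeriv l hg]
  exact (iteratedFDeriv ℝ l.length g x).map_coord_zero i hi

lemma support_iterDirD_subset (l : List E) {g : E → ℂ} (hg : ContDiff ℝ (⊤ : ℕ∞) g) :
    Function.support (iterDirD l g) ⊆ tsupport g := by
  intro x hx
  refine support_iteratedFDeriv_subset (𝕜 := ℝ) l.length fun h => hx ?_
  simp [iterDirD_eq_iteratedFDeriv l hg, h]

lemma exists_norm_iterDirD_le {g : E → ℂ} (hg : ContDiff ℝ (⊤ : ℕ∞) g)
    (hgc : HasCompactSupport g) (n : ℕ) :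
    ∃ C : ℝ, 0 ≤ C ∧ ∀ l : List E, l.length ≤ n → (∀ v ∈ l, ‖v‖ ≤ 1) →
      ∀ x, ‖iterDirD l g x‖ ≤ C := by
  have hbound (i : ℕ) : ∃ C : ℝ, ∀ x, ‖iteratedFDeriv ℝ i g x‖ ≤ C :=
    (hgc.iteratedFDeriv i).exists_bound_of_continuous
      (hg.continuous_iteratedFDeriv (WithTop.coe_le_coe.2 le_top))
  choose C hC using hbound
  have hC0 (i : ℕ) : 0 ≤ C i := (norm_nonneg _).trans (hC i 0)
  refine ⟨∑ i ∈ range (n + 1), C i, sum_nonneg fun i _ => hC0 i, fun l hl hl1 x => ?_⟩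
  have hprod : ∏ i, ‖l.get i‖ ≤ 1 :=
    prod_le_one (fun _ _ => norm_nonneg _) fun i _ => hl1 _ (l.get_mem i)
  rw [iterDirD_eq_iteratedFDeriv l hg]
  calc ‖iteratedFDeriv ℝ l.length g x l.get‖
      ≤ ‖iteratedFDeriv ℝ l.length g x‖ * ∏ i, ‖l.get i‖ :=
        (iteratedFDeriv ℝ l.length g x).le_opNorm _
    _ ≤ C l.length * 1 := by gcongr; exacts [hC0 _, hC _ x]
    _ = C l.length := mul_one _
    _ ≤ ∑ i ∈ range (n + 1), C i :=
        single_le_sum (fun i _ => hC0 i) (mem_range.2 (Nat.lt_succ_of_le hl))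

end IterDirD

section Multiindex

variable {d : ℕ}

/-- Labels for the coordinates of `Q d`: `none` is `r` and `some i` is `θ_i`. -/
abbrev Coord (d : ℕ) : Type := Option (Fin d)

/-- The coordinate direction of `Q d` with a given label. -/
def coordVec : Coord d → Q d
  | none => eR d
  | some i => eTh d i

/-- The coordinate direction of phase space with a given label: `Sum.inl` is a position and
`Sum.inr` a momentum. -/
def phaseVec : Coord d ⊕ Coord d → Q d × Q d :=
  Sum.elim (fun o => (coordVec o, 0)) fun o => (0, coordVec o)

/-- The coordinate direction of the space of triples `(q, p, q')` with a given label, the three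
summands labelling `q`, `p` and `q'` in this order. -/
def ampVec : Coord d ⊕ Coord d ⊕ Coord d → Q d × Q d × Q d :=
  Sum.elim (fun o => (coordVec o, 0, 0))
    (Sum.elim (fun o => (0, coordVec o, 0)) fun o => (0, 0, coordVec o))

/-- The coordinates in which `∂^α` differentiates, with multiplicity. -/
def coordList (α : MIdx d) : List (Coord d) :=
  List.replicate α.1 none ++ (List.finRange d).flatMap fun i => List.replicate (α.2 i) (some i)

/-- The coordinates in which `∂_q^α ∂_p^β` differentiates, with multiplicity. -/
def phaseList (α β : MIdx d) : List (Coord d ⊕ Coord d) :=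
  (coordList α).map Sum.inl ++ (coordList β).map Sum.inr

/-- The coordinates in which `∂_q^α ∂_p^β ∂_{q'}^γ` differentiates, with multiplicity. -/
def ampList (α β γ : MIdx d) : List (Coord d ⊕ Coord d ⊕ Coord d) :=
  (coordList α).map Sum.inl ++ (phaseList β γ).map Sum.inr

lemma length_coordList (α : MIdx d) : (coordList α).length = deg α := by
  simp [coordList, deg, List.length_flatMap, ← List.ofFn_eq_map, List.sum_ofFn]

lemma length_phaseList (α β : MIdx d) : (phaseList α β).length = deg α + deg β := by
  simp [phaseList, length_coordList]

lemma length_ampList (α β γ : MIdx d) :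
    (ampList α β γ).length = deg α + (deg β + deg γ) := by
  simp [ampList, length_coordList, length_phaseList]

lemma iterDirD_map_coordList {E : Type*} [NormedAddCommGroup E] [NormedSpace ℝ E]
    (e : Coord d → E) (α : MIdx d) (g : E → ℂ) :
    iterDirD ((coordList α).map e) g = (dirD (e none))^[α.1]
      ((List.finRange d).foldr (fun i h => (dirD (e (some i)))^[α.2 i] h) g) := by
  rw [coordList, List.map_append, iterDirD_append, List.map_replicate, iterDirD_replicate]
  congr 1
  induction List.finRange d with
  | nil => rfl
  | cons i L ih =>
    rw [List.flatMap_cons, List.map_append, iterDirD_append, ih, List.map_replicate,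
      iterDirD_replicate, List.foldr_cons]

lemma mderiv2_eq_iterDirD (α β : MIdx d) (g : Q d × Q d → ℂ) :
    mderiv2 α β g = iterDirD ((phaseList α β).map phaseVec) g := by
  simp only [phaseList, List.map_append, List.map_map, iterDirD_append, iterDirD_map_coordList]
  rfl

lemma mderiv3_eq_iterDirD (α β γ : MIdx d) (g : Q d × Q d × Q d → ℂ) :
    mderiv3 α β γ g = iterDirD ((ampList α β γ).map ampVec) g := by
  simp only [ampList, phaseList, List.map_append, List.map_map, iterDirD_append,
    iterDirD_map_coordList]
  rfl

lemma count_coordList (α : MIdx d) (o : Coord d) :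
    (coordList α).count o = o.elim α.1 α.2 := by
  cases o <;> simp [coordList, List.count_flatMap, List.count_replicate, Function.comp_def,
    ← List.ofFn_eq_map, List.sum_ofFn]

lemma exists_coordList_perm (l : List (Coord d)) : ∃ α : MIdx d, l.Perm (coordList α) := by
  refine ⟨(l.count none, fun i => l.count (some i)), List.perm_iff_count.2 fun o => ?_⟩
  rw [count_coordList]
  cases o <;> rfl

lemma exists_phaseList_perm (l : List (Coord d ⊕ Coord d)) :
    ∃ α β : MIdx d, l.Perm (phaseList α β) := by
  suffices h : ∃ l₁ l₂ : List (Coord d), l.Perm (l₁.map Sum.inl ++ l₂.map Sum.inr) by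
    obtain ⟨l₁, l₂, hl⟩ := h
    obtain ⟨α, hα⟩ := exists_coordList_perm l₁
    obtain ⟨β, hβ⟩ := exists_coordList_perm l₂
    exact ⟨α, β, hl.trans ((hα.map _).append (hβ.map _))⟩
  induction l with
  | nil => exact ⟨[], [], List.Perm.refl []⟩
  | cons v l ih =>
    obtain ⟨l₁, l₂, hl⟩ := ih
    rcases v with o | o
    · exact ⟨o :: l₁, l₂, hl.cons _⟩
    · exact ⟨l₁, o :: l₂, (hl.cons _).trans List.perm_middle.symm⟩

lemma countP_isRight_phaseList (α β : MIdx d) :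
    (phaseList α β).countP Sum.isRight = deg β := by
  simp [phaseList, List.countP_map, Function.comp_def, length_coordList]

/-- The label of a `p`-coordinate among those of the triples `(q, p, q')`. -/
def isMomentum : Coord d ⊕ Coord d ⊕ Coord d → Bool :=
  Sum.elim (fun _ => false) Sum.isLeft

lemma countP_isMomentum_ampList (α β γ : MIdx d) :
    (ampList α β γ).countP isMomentum = deg β := by
  simp [ampList, phaseList, isMomentum, List.countP_map, Function.comp_def, length_coordList]

end Multiindex

section Weights

variable {d : ℕ}

/-- The weight `F` on the angular coordinates and `1` on the radial one. -/
def angularWeight (F : ℝ) : Coord d → ℝ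
  | none => 1
  | some _ => F

/-- The factor by which the symplectic dilation `θ ↦ F⁻¹ θ`, `η ↦ F η` scales each coordinate
direction of phase space. -/
def phaseWeight (F : ℝ) : Coord d ⊕ Coord d → ℝ :=
  Sum.elim (angularWeight F⁻¹) (angularWeight F)

lemma prod_angularWeight_coordList (F : ℝ) (α : MIdx d) :
    ((coordList α).map (angularWeight F)).prod = F ^ degA α := by
  simp [coordList, degA, angularWeight, List.flatMap, List.prod_flatten, Function.comp_def,
    List.map_flatten, ← List.ofFn_eq_map, List.prod_ofFn, prod_pow_eq_pow_sum]

lemma prod_phaseWeight_phaseList {F : ℝ} (hF : 0 < F) (α β : MIdx d) :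
    ((phaseList α β).map (phaseWeight F)).prod = F ^ ((degA β : ℝ) - (degA α : ℝ)) := by
  have hcomp : ((phaseList α β).map (phaseWeight F)).prod =
      ((coordList α).map (angularWeight F⁻¹)).prod *
        ((coordList β).map (angularWeight F)).prod := by
    simp [phaseList, phaseWeight, Function.comp_def]
  rw [hcomp, prod_angularWeight_coordList, prod_angularWeight_coordList, Real.rpow_sub hF,
    Real.rpow_natCast, Real.rpow_natCast, inv_pow, inv_mul_eq_div]

lemma phaseWeight_pos {F : ℝ} (hF : 0 < F) (v : Coord d ⊕ Coord d) : 0 < phaseWeight F v := by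
  rcases v with (_ | _) | (_ | _) <;> simp [phaseWeight, angularWeight, hF]

lemma phaseWeight_le_mul {K F G : ℝ} (hK : 1 ≤ K) (hF : 0 < F) (hG : 0 < G) (hFG : F ≤ K * G)
    (hGF : G ≤ K * F) (v : Coord d ⊕ Coord d) : phaseWeight F v ≤ K * phaseWeight G v := by
  have hinv : F⁻¹ ≤ K * G⁻¹ := by
    rw [inv_le_iff_one_le_mul₀ hF, mul_right_comm, ← div_eq_mul_inv, one_le_div hG]
    exact hGF
  rcases v with (_ | _) | (_ | _) <;> simpa [phaseWeight, angularWeight]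

end Weights

section Symbol

variable {d : ℕ} {f : ℝ → ℝ} {m : ℝ} {N : ℕ} {a : Q d × Q d → ℂ}

lemma brP_pos (p : Q d) : 0 < brP p :=
  Real.sqrt_pos.2 (by positivity)

lemma brF_pos (f : ℝ → ℝ) (y : Q d × Q d) : 0 < brF f y :=
  Real.sqrt_pos.2 (by positivity)

/-- The weighted supremum of `∂_q^α ∂_p^β a`, that is, the contribution of `(α, β)` to the
seminorms of `S^m_f`. -/
def symSup (f : ℝ → ℝ) (m : ℝ) (α β : MIdx d) (a : Q d × Q d → ℂ) : ℝ :=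
  ⨆ y : Q d × Q d, f y.1.1 ^ (-(degA α : ℝ) + (degA β : ℝ)) * brF f y ^ (-m + (deg β : ℝ)) *
    ‖mderiv2 α β a y‖

lemma symSup_nonneg (hf : ∀ r, 0 < f r) (m : ℝ) (α β : MIdx d) (a : Q d × Q d → ℂ) :
    0 ≤ symSup f m α β a :=
  Real.iSup_nonneg fun y => mul_nonneg (mul_nonneg (Real.rpow_nonneg (hf _).le _)
    (Real.rpow_nonneg (brF_pos f y).le _)) (norm_nonneg _)

lemma norm_mderiv2_le_symSup (hf : ∀ r, 0 < f r) (ha : IsSymbol f m a) (α β : MIdx d)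
    (y : Q d × Q d) :
    ‖mderiv2 α β a y‖ ≤ symSup f m α β a *
      (f y.1.1 ^ ((degA α : ℝ) - (degA β : ℝ)) * brF f y ^ (m - (deg β : ℝ))) := by
  set w : Q d × Q d → ℝ := fun z =>
    f z.1.1 ^ ((degA α : ℝ) - (degA β : ℝ)) * brF f z ^ (m - (deg β : ℝ))
  have hw (z : Q d × Q d) : 0 < w z :=
    mul_pos (Real.rpow_pos_of_pos (hf _) _) (Real.rpow_pos_of_pos (brF_pos f z) _)
  have hsup : symSup f m α β a = ⨆ z, ‖mderiv2 α β a z‖ / w z := by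
    refine iSup_congr fun z => ?_
    rw [neg_add_eq_sub, neg_add_eq_sub, ← neg_sub (degA α : ℝ), ← neg_sub m,
      Real.rpow_neg (hf _).le, Real.rpow_neg (brF_pos f z).le, ← mul_inv, inv_mul_eq_div]
  obtain ⟨C, hC⟩ := ha.2 α β
  have hbdd : BddAbove (Set.range fun z => ‖mderiv2 α β a z‖ / w z) := by
    refine ⟨C, Set.forall_mem_range.2 fun z => (div_le_iff₀ (hw z)).2 ?_⟩
    simpa only [w, mul_assoc] using hC z
  rw [← div_le_iff₀ (hw y), hsup]
  exact le_ciSup hbdd y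

lemma symNorm_eq_sum_symSup (f : ℝ → ℝ) (m : ℝ) (N : ℕ) (a : Q d × Q d → ℂ) :
    symNorm f m N a = ∑ α ∈ idxSet d N, ∑ β ∈ idxSet d N,
      if deg α + deg β ≤ N then symSup f m α β a else 0 := rfl

lemma symNorm_nonneg (hf : ∀ r, 0 < f r) (m : ℝ) (N : ℕ) (a : Q d × Q d → ℂ) :
    0 ≤ symNorm f m N a := by
  rw [symNorm_eq_sum_symSup]
  exact sum_nonneg fun α _ => sum_nonneg fun β _ => ite_nonneg (symSup_nonneg hf m α β a) le_rfl

lemma mem_idxSet {α : MIdx d} : α ∈ idxSet d N ↔ deg α ≤ N := by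
  refine ⟨fun h => (mem_filter.1 h).2, fun h => mem_filter.2 ⟨?_, h⟩⟩
  have hle (i : Fin d) : α.2 i ≤ ∑ i, α.2 i := single_le_sum (fun _ _ => Nat.zero_le _) (mem_univ i)
  simp only [mem_product, mem_range, Fintype.mem_piFinset]
  unfold deg at h
  exact ⟨by omega, fun i => by have := hle i; omega⟩

lemma symSup_le_symNorm (hf : ∀ r, 0 < f r) (m : ℝ) (a : Q d × Q d → ℂ) {α β : MIdx d}
    (h : deg α + deg β ≤ N) : symSup f m α β a ≤ symNorm f m N a := by
  have hterm (α β : MIdx d) : 0 ≤ if deg α + deg β ≤ N then symSup f m α β a else 0 :=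
    ite_nonneg (symSup_nonneg hf m α β a) le_rfl
  rw [symNorm_eq_sum_symSup]
  calc symSup f m α β a = if deg α + deg β ≤ N then symSup f m α β a else 0 := (if_pos h).symm
    _ ≤ ∑ β ∈ idxSet d N, if deg α + deg β ≤ N then symSup f m α β a else 0 :=
        single_le_sum (fun β _ => hterm α β) (mem_idxSet.2 (by omega))
    _ ≤ _ := single_le_sum (f := fun α => ∑ β ∈ idxSet d N,
        if deg α + deg β ≤ N then symSup f m α β a else 0)
        (fun α _ => sum_nonneg fun β _ => hterm α β) (mem_idxSet.2 (by omega))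

lemma norm_iterDirD_phaseVec_le (hf : ∀ r, 0 < f r) (ha : IsSymbol f m a)
    {l : List (Coord d ⊕ Coord d)} (hl : l.length ≤ N) (y : Q d × Q d) :
    ‖iterDirD (l.map phaseVec) a y‖ ≤ symNorm f m N a *
      ((l.map (phaseWeight (f y.1.1))).prod⁻¹ * brF f y ^ (m - (l.countP Sum.isRight : ℝ))) := by
  obtain ⟨α, β, hperm⟩ := exists_phaseList_perm l
  have hdeg : deg α + deg β ≤ N := by
    rwa [← length_phaseList, ← hperm.length_eq]
  rw [iterDirD_perm (hperm.map phaseVec) ha.1, (hperm.map _).prod_eq, hperm.countP_eq,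
    ← mderiv2_eq_iterDirD, countP_isRight_phaseList, prod_phaseWeight_phaseList (hf _),
    ← Real.rpow_neg (hf _).le, neg_sub]
  refine (norm_mderiv2_le_symSup hf ha α β y).trans ?_
  gcongr
  · exact mul_nonneg (Real.rpow_nonneg (hf _).le _) (Real.rpow_nonneg (brF_pos f y).le _)
  · exact symSup_le_symNorm hf m a hdeg

end Symbol

section Comparison

lemma rpow_le_rpow_abs_mul_rpow {K u v : ℝ} (e : ℝ) (hK : 0 < K) (hu : 0 < u) (hv : 0 < v)
    (huv : u ≤ K * v) (hvu : v ≤ K * u) : u ^ e ≤ K ^ |e| * v ^ e := by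
  rcases le_total 0 e with he | he
  · rw [abs_of_nonneg he, ← Real.mul_rpow hK.le hv.le]
    exact Real.rpow_le_rpow hu.le huv he
  · rw [abs_of_nonpos he, Real.rpow_neg hK.le, ← Real.inv_rpow hK.le,
      ← Real.mul_rpow (inv_nonneg.2 hK.le) hv.le]
    exact Real.rpow_le_rpow_of_nonpos (by positivity) ((inv_mul_le_iff₀ hK).2 hvu) he

lemma brP_le_mul_brP {d : ℕ} {K : ℝ} (hK : 1 ≤ K) {p₁ p₂ : Q d} (hρ : p₁.1 = p₂.1)
    (hη : ∀ i, |p₁.2 i| ≤ K * |p₂.2 i|) : brP p₁ ≤ K * brP p₂ := by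
  have hsum : ∑ i, p₁.2 i ^ 2 ≤ K ^ 2 * ∑ i, p₂.2 i ^ 2 := by
    rw [mul_sum]
    refine sum_le_sum fun i _ => ?_
    rw [← sq_abs, ← sq_abs (p₂.2 i), ← mul_pow]
    exact pow_le_pow_left₀ (abs_nonneg _) (hη i) 2
  refine Real.sqrt_le_iff.2 ⟨mul_nonneg (by positivity) (brP_pos p₂).le, ?_⟩
  rw [mul_pow, brP, Real.sq_sqrt (by positivity), hρ]
  nlinarith [one_le_pow₀ hK (n := 2), sq_nonneg p₂.1]

/-- A function is slowly varying if its values at points within bounded distance of each other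
are comparable, uniformly in the points. -/
def SlowlyVarying (f : ℝ → ℝ) : Prop :=
  ∀ δ : ℝ, ∃ M : ℝ, ∀ x y : ℝ, |x - y| ≤ δ → f x ≤ M * f y

lemma SlowlyVarying.exists_one_le {f : ℝ → ℝ} (hslow : SlowlyVarying f) (hf : ∀ r, 0 < f r)
    (δ : ℝ) : ∃ M : ℝ, 1 ≤ M ∧ ∀ x y : ℝ, |x - y| ≤ δ → f x ≤ M * f y := by
  obtain ⟨M, hM⟩ := hslow δ
  exact ⟨max M 1, le_max_right _ _, fun x y hxy => (hM x y hxy).trans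
    (mul_le_mul_of_nonneg_right (le_max_left _ _) (hf y).le)⟩

lemma GoodF.slowlyVarying {f : ℝ → ℝ} (hf : GoodF f) : SlowlyVarying f := by
  obtain ⟨hsmooth, hf_one, hlog⟩ := hf
  have hf_pos (r : ℝ) : 0 < f r := one_pos.trans_le (hf_one r)
  obtain ⟨C, hC⟩ := hlog 1 le_rfl
  have hlip : LipschitzWith C.toNNReal fun r => Real.log (f r) := by
    refine lipschitzWith_of_nnnorm_deriv_le (fun r => ?_) fun r => ?_
    · exact (hsmooth.differentiable (by simp) r).log (hf_pos r).ne'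
    · rw [← iteratedDeriv_one, ← NNReal.coe_le_coe, coe_nnnorm]
      exact (hC r).trans (Real.le_coe_toNNReal C)
  refine fun δ => ⟨Real.exp (C.toNNReal * δ), fun x y hxy => ?_⟩
  have hdist : Real.log (f x) - Real.log (f y) ≤ C.toNNReal * δ :=
    (le_abs_self _).trans <| (hlip.dist_le_mul x y).trans <|
      mul_le_mul_of_nonneg_left hxy C.toNNReal.coe_nonneg
  calc f x = Real.exp (Real.log (f x)) := (Real.exp_log (hf_pos x)).symm
    _ ≤ Real.exp (C.toNNReal * δ + Real.log (f y)) := Real.exp_le_exp.2 (by linarith)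
    _ = Real.exp (C.toNNReal * δ) * f y := by rw [Real.exp_add, Real.exp_log (hf_pos y)]

end Comparison

section ScalingMap

variable {d : ℕ} {f : ℝ → ℝ} {m t T F K : ℝ} {N : ℕ} {a : Q d × Q d → ℂ}

/-- The linear map `(q, p, q') ↦ (tr + (1-t)r', F⁻¹(tθ + (1-t)θ'), ρ, Fη)` along which `scaledAmp`
pulls back a symbol. -/
def scalingMap (d : ℕ) (t F : ℝ) : (Q d × Q d × Q d) →L[ℝ] (Q d × Q d) :=
  LinearMap.toContinuousLinearMap
    { toFun := fun x => ((t * x.1.1 + (1 - t) * x.2.2.1,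
        F⁻¹ • (t • x.1.2 + (1 - t) • x.2.2.2)), (x.2.1.1, F • x.2.1.2))
      map_add' := fun x y => by ext <;> simp <;> ring
      map_smul' := fun c x => by ext <;> simp <;> ring }

lemma scalingMap_apply (t F : ℝ) (x : Q d × Q d × Q d) :
    scalingMap d t F x = ((t * x.1.1 + (1 - t) * x.2.2.1,
      F⁻¹ • (t • x.1.2 + (1 - t) • x.2.2.2)), (x.2.1.1, F • x.2.1.2)) := rfl

/-- The phase space coordinate onto whose direction `scalingMap` sends a given coordinate
direction of the triples `(q, p, q')`, up to a factor. -/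
def phaseLabel : Coord d ⊕ Coord d ⊕ Coord d → Coord d ⊕ Coord d :=
  Sum.elim Sum.inl (Sum.elim Sum.inr Sum.inl)

/-- The part of the factor in `scalingMap_ampVec` that comes from the interpolation
`t q + (1 - t) q'`. -/
def interpFactor (t : ℝ) : Coord d ⊕ Coord d ⊕ Coord d → ℝ :=
  Sum.elim (fun _ => t) (Sum.elim (fun _ => 1) fun _ => 1 - t)

lemma scalingMap_ampVec (t F : ℝ) (v : Coord d ⊕ Coord d ⊕ Coord d) :
    scalingMap d t F (ampVec v) =
      (interpFactor t v * phaseWeight F (phaseLabel v)) • phaseVec (phaseLabel v) := by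
  rw [scalingMap_apply]
  rcases v with (_ | _) | (_ | _) | (_ | _) <;> ext <;>
    simp [ampVec, coordVec, eR, eTh, interpFactor, phaseLabel, phaseWeight, angularWeight,
      phaseVec] <;> ring

lemma abs_interpFactor_le (ht : |t| ≤ T) (v : Coord d ⊕ Coord d ⊕ Coord d) :
    |interpFactor t v| ≤ 1 + T := by
  have ht' := abs_le.1 ht
  rcases v with _ | _ | _ <;> simp only [interpFactor, Sum.elim_inl, Sum.elim_inr] <;>
    rw [abs_le] <;> constructor <;> linarith

lemma countP_isRight_map_phaseLabel (l : List (Coord d ⊕ Coord d ⊕ Coord d)) :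
    (l.map phaseLabel).countP Sum.isRight = l.countP isMomentum := by
  rw [List.countP_map]
  congr 1
  funext v
  rcases v with _ | _ | _ <;> rfl

lemma iterDirD_comp_scalingMap (t F : ℝ) (l : List (Coord d ⊕ Coord d ⊕ Coord d))
    (ha : ContDiff ℝ (⊤ : ℕ∞) a) (x : Q d × Q d × Q d) :
    iterDirD (l.map ampVec) (fun z => a (scalingMap d t F z)) x =
      (l.map fun v => interpFactor t v * phaseWeight F (phaseLabel v)).prod •
        iterDirD ((l.map phaseLabel).map phaseVec) a (scalingMap d t F x) := by
  have hpull := congrFun (iterDirD_comp_clm_add (scalingMap d t F) 0 (l.map ampVec) ha) x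
  simp only [add_zero, List.map_map] at hpull
  have hvec : scalingMap d t F ∘ ampVec = fun v =>
      (interpFactor t v * phaseWeight F (phaseLabel v)) • phaseVec (phaseLabel v) :=
    funext (scalingMap_ampVec t F)
  rw [hpull, hvec, iterDirD_map_smul _ _ l ha, List.map_map]
  rfl

lemma abs_prod_interpFactor_mul_phaseWeight_le {G : ℝ} (hK : 1 ≤ K) (hF : 0 < F) (hG : 0 < G)
    (hFG : F ≤ K * G) (hGF : G ≤ K * F) (ht : |t| ≤ T)
    (l : List (Coord d ⊕ Coord d ⊕ Coord d)) :
    |(l.map fun v => interpFactor t v * phaseWeight F (phaseLabel v)).prod| ≤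
      ((1 + T) * K) ^ l.length * ((l.map phaseLabel).map (phaseWeight G)).prod := by
  have hT : 0 ≤ T := (abs_nonneg t).trans ht
  induction l with
  | nil => simp
  | cons v l ih =>
    have hfactor : |interpFactor t v * phaseWeight F (phaseLabel v)| ≤
        (1 + T) * (K * phaseWeight G (phaseLabel v)) := by
      rw [abs_mul, abs_of_pos (phaseWeight_pos hF _)]
      exact mul_le_mul (abs_interpFactor_le ht v) (phaseWeight_le_mul hK hF hG hFG hGF _)
        (phaseWeight_pos hF _).le (by linarith)
    simp only [List.map_cons, List.prod_cons, List.length_cons]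
    rw [abs_mul]
    refine (mul_le_mul hfactor ih (abs_nonneg _) ((abs_nonneg _).trans hfactor)).trans_eq ?_
    ring

lemma brF_scalingMap (f : ℝ → ℝ) (t F : ℝ) (x : Q d × Q d × Q d) :
    brF f (scalingMap d t F x) =
      brP (x.2.1.1, (F / f (scalingMap d t F x).1.1) • x.2.1.2) := by
  simp [brF, brP, scalingMap_apply, mul_div_right_comm]

lemma brF_scalingMap_le (hf : ∀ r, 0 < f r) (hK : 1 ≤ K) (hF : 0 < F) {x : Q d × Q d × Q d}
    (hFf : F ≤ K * f (scalingMap d t F x).1.1) :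
    brF f (scalingMap d t F x) ≤ K * brP x.2.1 := by
  rw [brF_scalingMap]
  refine brP_le_mul_brP hK rfl fun i => ?_
  simp only [Pi.smul_apply, smul_eq_mul, abs_mul, abs_of_pos (div_pos hF (hf _))]
  gcongr
  exact (div_le_iff₀ (hf _)).2 hFf

lemma brP_le_mul_brF_scalingMap (hf : ∀ r, 0 < f r) (hK : 1 ≤ K) (hF : 0 < F)
    {x : Q d × Q d × Q d} (hfF : f (scalingMap d t F x).1.1 ≤ K * F) :
    brP x.2.1 ≤ K * brF f (scalingMap d t F x) := by
  rw [brF_scalingMap]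
  refine brP_le_mul_brP hK rfl fun i => ?_
  simp only [Pi.smul_apply, smul_eq_mul, abs_mul, abs_of_pos (div_pos hF (hf _)), ← mul_assoc]
  refine le_mul_of_one_le_left (abs_nonneg _) ?_
  rwa [← mul_div_assoc, one_le_div (hf _)]

lemma norm_iterDirD_comp_scalingMap_le (hf : ∀ r, 0 < f r) (ha : IsSymbol f m a) (hK : 1 ≤ K)
    (hF : 0 < F) {x : Q d × Q d × Q d} (hFf : F ≤ K * f (scalingMap d t F x).1.1)
    (hfF : f (scalingMap d t F x).1.1 ≤ K * F) (ht : |t| ≤ T)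
    {l : List (Coord d ⊕ Coord d ⊕ Coord d)} (hl : l.length ≤ N) :
    ‖iterDirD (l.map ampVec) (fun z => a (scalingMap d t F z)) x‖ ≤
      ((1 + T) * K) ^ N * K ^ |m - (l.countP isMomentum : ℝ)| * symNorm f m N a *
        brP x.2.1 ^ (m - (l.countP isMomentum : ℝ)) := by
  have hT : 0 ≤ T := (abs_nonneg t).trans ht
  have hS := symNorm_nonneg hf m N a
  set y := scalingMap d t F x with hy
  set e : ℝ := m - (l.countP isMomentum : ℝ)
  set w : ℝ := ((l.map phaseLabel).map (phaseWeight (f y.1.1))).prod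
  have hw : 0 < w := List.prod_pos fun _ h => by
    obtain ⟨v, -, rfl⟩ := List.mem_map.1 h
    exact phaseWeight_pos (hf _) v
  have hfactor : |(l.map fun v => interpFactor t v * phaseWeight F (phaseLabel v)).prod| ≤
      ((1 + T) * K) ^ l.length * w :=
    abs_prod_interpFactor_mul_phaseWeight_le hK hF (hf _) hFf hfF ht l
  have hsymbol : ‖iterDirD ((l.map phaseLabel).map phaseVec) a y‖ ≤
      symNorm f m N a * (w⁻¹ * brF f y ^ e) := by
    simpa only [countP_isRight_map_phaseLabel] using
      norm_iterDirD_phaseVec_le hf ha (l := l.map phaseLabel) (by rwa [List.length_map]) y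
  have hbracket : brF f y ^ e ≤ K ^ |e| * brP x.2.1 ^ e :=
    rpow_le_rpow_abs_mul_rpow e (by positivity) (brF_pos f y) (brP_pos _)
      (brF_scalingMap_le hf hK hF hFf) (brP_le_mul_brF_scalingMap hf hK hF hfF)
  rw [iterDirD_comp_scalingMap t F l ha.1, norm_smul, Real.norm_eq_abs, ← hy]
  calc _ ≤ ((1 + T) * K) ^ l.length * w * (symNorm f m N a * (w⁻¹ * brF f y ^ e)) := by gcongr
    _ = ((1 + T) * K) ^ l.length * symNorm f m N a * brF f y ^ e := by field_simp
    _ ≤ ((1 + T) * K) ^ N * symNorm f m N a * (K ^ |e| * brP x.2.1 ^ e) := by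
        have hbr := Real.rpow_nonneg (brF_pos f y).le e
        gcongr
        nlinarith
    _ = _ := by ring

end ScalingMap

section Localization

variable {d : ℕ}

/-- The radial coordinates `(r, r')` of a triple `(q, p, q')`. -/
def radialPair (d : ℕ) : (Q d × Q d × Q d) →L[ℝ] ℝ × ℝ :=
  .prod (.comp (.fst ℝ ℝ _) (.fst ℝ _ _))
    (.comp (.fst ℝ ℝ _) (.comp (.snd ℝ _ _) (.snd ℝ _ _)))

lemma radialPair_apply (x : Q d × Q d × Q d) : radialPair d x = (x.1.1, x.2.2.1) := rfl

lemma radialPair_ampVec_of_isMomentum {v : Coord d ⊕ Coord d ⊕ Coord d} (hv : isMomentum v) :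
    radialPair d (ampVec v) = 0 := by
  rcases v with _ | _ | _ <;> simp_all [isMomentum, ampVec, radialPair_apply]

lemma norm_radialPair_ampVec_le (v : Coord d ⊕ Coord d ⊕ Coord d) :
    ‖radialPair d (ampVec v)‖ ≤ 1 := by
  rcases v with (_ | _) | (_ | _) | (_ | _) <;>
    simp [ampVec, radialPair_apply, coordVec, eR, eTh]

/-- The product cutoff `ψ(s) ψ(s')` in the radial variables, whose translates localize
`scaledAmp`. -/
def cutoff (ψ : ℝ → ℝ) (s : ℝ × ℝ) : ℂ := Complex.ofReal (ψ s.1) * Complex.ofReal (ψ s.2)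

lemma contDiff_cutoff {ψ : ℝ → ℝ} (hψ : ContDiff ℝ (⊤ : ℕ∞) ψ) :
    ContDiff ℝ (⊤ : ℕ∞) (cutoff ψ) :=
  (Complex.ofRealCLM.contDiff.comp (hψ.comp contDiff_fst)).mul
    (Complex.ofRealCLM.contDiff.comp (hψ.comp contDiff_snd))

lemma hasCompactSupport_cutoff {ψ : ℝ → ℝ} (hψ : HasCompactSupport ψ) :
    HasCompactSupport (cutoff ψ) := by
  refine HasCompactSupport.intro (hψ.isCompact.prod hψ.isCompact) fun s hs => ?_
  rcases not_and_or.1 (mt Set.mem_prod.2 hs) with h | h <;>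
    simp [cutoff, image_eq_zero_of_notMem_tsupport h]

lemma scaledAmp_eq_mul (f ψ : ℝ → ℝ) (t : ℝ) (j k : ℤ) (a : Q d × Q d → ℂ) :
    scaledAmp d f ψ t j k a = (fun x => cutoff ψ (radialPair d x - ((j : ℝ), (k : ℝ)))) *
      fun x => a (scalingMap d t (f (t * j + (1 - t) * k)) x) := by
  funext x
  simp only [scaledAmp, cutoff, radialPair_apply, scalingMap_apply, Pi.mul_apply, Prod.mk_sub_mk]

lemma iterDirD_comp_radialPair_sub {g : ℝ × ℝ → ℂ} (hg : ContDiff ℝ (⊤ : ℕ∞) g) (c : ℝ × ℝ)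
    (l : List (Q d × Q d × Q d)) :
    iterDirD l (fun x => g (radialPair d x - c)) =
      fun x => iterDirD (l.map (radialPair d)) g (radialPair d x - c) := by
  simpa only [sub_eq_add_neg] using iterDirD_comp_clm_add (radialPair d) (-c) l hg

lemma countP_isMomentum_eq_zero_and_mem_tsupport {g : ℝ × ℝ → ℂ} (hg : ContDiff ℝ (⊤ : ℕ∞) g)
    {c : ℝ × ℝ} {l : List (Coord d ⊕ Coord d ⊕ Coord d)} {x : Q d × Q d × Q d}
    (hne : iterDirD (l.map ampVec) (fun z => g (radialPair d z - c)) x ≠ 0) :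
    l.countP isMomentum = 0 ∧ radialPair d x - c ∈ tsupport g := by
  rw [iterDirD_comp_radialPair_sub hg] at hne
  refine ⟨List.countP_eq_zero.2 fun v hv hvm => hne ?_, support_iterDirD_subset _ hg hne⟩
  have hmem : (0 : ℝ × ℝ) ∈ (l.map ampVec).map (radialPair d) := by
    rw [← radialPair_ampVec_of_isMomentum hvm]
    exact List.mem_map_of_mem (List.mem_map_of_mem hv)
  exact congrFun (iterDirD_eq_zero_of_zero_mem hmem hg) _

lemma exists_norm_iterDirD_radial_le {g : ℝ × ℝ → ℂ} (hg : ContDiff ℝ (⊤ : ℕ∞) g)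
    (hgc : HasCompactSupport g) (d n : ℕ) :
    ∃ B > (0 : ℝ), ∀ l : List (Coord d ⊕ Coord d ⊕ Coord d), l.length ≤ n →
      ∀ (c : ℝ × ℝ) (x : Q d × Q d × Q d),
        ‖iterDirD (l.map ampVec) (fun z => g (radialPair d z - c)) x‖ ≤ B := by
  obtain ⟨C, hC, hgC⟩ := exists_norm_iterDirD_le hg hgc n
  refine ⟨C + 1, by positivity, fun l hl c x => ?_⟩
  have hnorm : ∀ v ∈ (l.map ampVec).map (radialPair d), ‖v‖ ≤ 1 := by
    simp only [List.map_map, List.forall_mem_map]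
    exact fun v _ => norm_radialPair_ampVec_le v
  rw [iterDirD_comp_radialPair_sub hg]
  exact (hgC _ (by simpa only [List.length_map]) hnorm _).trans (lt_add_one C).le

lemma abs_interp_sub_interp_le {t T R : ℝ} (ht : |t| ≤ T) {s c : ℝ × ℝ} (hsc : ‖s - c‖ ≤ R) :
    |t * s.1 + (1 - t) * s.2 - (t * c.1 + (1 - t) * c.2)| ≤ (1 + 2 * T) * R := by
  have hT : 0 ≤ T := (abs_nonneg t).trans ht
  have h₁ : |s.1 - c.1| ≤ R := (norm_fst_le (s - c)).trans hsc
  have h₂ : |s.2 - c.2| ≤ R := (norm_snd_le (s - c)).trans hsc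
  have ht' : |1 - t| ≤ 1 + T := (norm_sub_le 1 t).trans (by simpa using ht)
  calc |t * s.1 + (1 - t) * s.2 - (t * c.1 + (1 - t) * c.2)|
      = |t * (s.1 - c.1) + (1 - t) * (s.2 - c.2)| := by ring_nf
    _ ≤ |t| * |s.1 - c.1| + |1 - t| * |s.2 - c.2| := by
        simpa only [abs_mul] using abs_add_le (t * (s.1 - c.1)) ((1 - t) * (s.2 - c.2))
    _ ≤ T * R + (1 + T) * R := by gcongr
    _ = (1 + 2 * T) * R := by ring

lemma norm_iterDirD_radial_mul_norm_iterDirD_symbol_le {f : ℝ → ℝ} (hf : ∀ r, 0 < f r)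
    {m : ℝ} {a : Q d × Q d → ℂ} (ha : IsSymbol f m a) {g : ℝ × ℝ → ℂ}
    (hg : ContDiff ℝ (⊤ : ℕ∞) g) {B M R t T : ℝ} {N : ℕ} (hsupp : ∀ s ∈ tsupport g, ‖s‖ ≤ R)
    (ht : |t| ≤ T) (hM : 1 ≤ M) (hfM : ∀ x y, |x - y| ≤ (1 + 2 * T) * R → f x ≤ M * f y)
    {c : ℝ × ℝ} {x : Q d × Q d × Q d} {l l₁ l₂ : List (Coord d ⊕ Coord d ⊕ Coord d)}
    (hl : (l₁ ++ l₂).Perm l) (hlN : l.length ≤ N)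
    (hgB : ‖iterDirD (l₁.map ampVec) (fun z => g (radialPair d z - c)) x‖ ≤ B) :
    ‖iterDirD (l₁.map ampVec) (fun z => g (radialPair d z - c)) x‖ *
        ‖iterDirD (l₂.map ampVec)
          (fun z => a (scalingMap d t (f (t * c.1 + (1 - t) * c.2)) z)) x‖ ≤
      B * (((1 + T) * M) ^ N * M ^ |m - (l.countP isMomentum : ℝ)| * symNorm f m N a *
        brP x.2.1 ^ (m - (l.countP isMomentum : ℝ))) := by
  have hT : 0 ≤ T := (abs_nonneg t).trans ht
  have hB : 0 ≤ B := (norm_nonneg _).trans hgB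
  by_cases hzero : iterDirD (l₁.map ampVec) (fun z => g (radialPair d z - c)) x = 0
  · have hS := symNorm_nonneg hf m N a
    have hbr := brP_pos x.2.1
    rw [hzero, norm_zero, zero_mul]
    positivity
  obtain ⟨hcount₁, hs⟩ := countP_isMomentum_eq_zero_and_mem_tsupport hg hzero
  have hdist : |(scalingMap d t (f (t * c.1 + (1 - t) * c.2)) x).1.1 -
      (t * c.1 + (1 - t) * c.2)| ≤ (1 + 2 * T) * R := abs_interp_sub_interp_le ht (hsupp _ hs)
  have hcount : l₂.countP isMomentum = l.countP isMomentum := by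
    rw [← hl.countP_eq, List.countP_append, hcount₁, zero_add]
  have hl₂ : l₂.length ≤ N := by
    rw [← hl.length_eq, List.length_append] at hlN
    omega
  have hsymbol := norm_iterDirD_comp_scalingMap_le hf ha hM (hf (t * c.1 + (1 - t) * c.2))
    (hfM _ _ ((abs_sub_comm _ _).trans_le hdist)) (hfM _ _ hdist) ht hl₂
  rw [hcount] at hsymbol
  exact mul_le_mul hgB hsymbol (norm_nonneg _) hB

end Localization

theorem statement8_general (d : ℕ) {f : ℝ → ℝ} (hf : ∀ r, 0 < f r) (hslow : SlowlyVarying f)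
    (m : ℝ) {ψ : ℝ → ℝ} (hψs : ContDiff ℝ (⊤ : ℕ∞) ψ) (hψc : HasCompactSupport ψ) {I : Set ℝ}
    (hI : Bornology.IsBounded I) :
    ∀ α β γ : MIdx d, ∃ C > (0 : ℝ), ∃ N' : ℕ,
      ∀ t ∈ I, ∀ j k : ℤ, ∀ a : Q d × Q d → ℂ, IsSymbol f m a →
        ∀ x : Q d × Q d × Q d,
          ‖mderiv3 α β γ (scaledAmp d f ψ t j k a) x‖
            ≤ C * symNorm f m N' a * brP x.2.1 ^ (m - (deg β : ℝ)) := by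
  intro α β γ
  have hχ := contDiff_cutoff hψs
  have hχc := hasCompactSupport_cutoff hψc
  set n : ℕ := deg α + (deg β + deg γ)
  have hlen : (ampList α β γ).length = n := length_ampList α β γ
  obtain ⟨T, hT, hIT⟩ := hI.exists_pos_norm_le
  obtain ⟨R, -, hsupp⟩ := hχc.isCompact.isBounded.exists_pos_norm_le
  obtain ⟨M, hM, hfM⟩ := hslow.exists_one_le hf ((1 + 2 * T) * R)
  obtain ⟨B, hB, hχB⟩ := exists_norm_iterDirD_radial_le hχ hχc d n
  refine ⟨2 ^ n * (B * (((1 + T) * M) ^ n * M ^ |m - (deg β : ℝ)|)), by positivity, n,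
    fun t ht j k a ha x => ?_⟩
  have hleibniz := norm_iterDirD_mul_le ampVec (l := ampList α β γ) (x := x)
    (hχ.comp ((radialPair d).contDiff.sub (contDiff_const (c := ((j : ℝ), (k : ℝ))))))
    (ha.1.comp (scalingMap d t (f (t * j + (1 - t) * k))).contDiff) fun l₁ l₂ hl =>
      norm_iterDirD_radial_mul_norm_iterDirD_symbol_le hf ha hχ hsupp (hIT t ht) hM hfM hl
        hlen.le (hχB l₁ (by
          rw [← hlen, ← hl.length_eq, List.length_append]
          exact Nat.le_add_right _ _) (j, k) x)
  rw [hlen, countP_isMomentum_ampList] at hleibniz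
  rw [mderiv3_eq_iterDirD, scaledAmp_eq_mul]
  exact hleibniz.trans_eq (by ring)

/-- uniform amplitude estimates for the rescaled localized amplitudes. -/
theorem statement8 (d : ℕ) (f : ℝ → ℝ) (hf : GoodF f) (m : ℝ)
    (ψ : ℝ → ℝ) (hψs : ContDiff ℝ (⊤ : ℕ∞) ψ) (hψc : HasCompactSupport ψ)
    (hψ0 : ∀ r : ℝ, 0 ≤ ψ r) (hψsupp : tsupport ψ ⊆ Set.Ioo (-1 : ℝ) 1)
    (hψsum : ∀ r : ℝ, ∑' j : ℤ, ψ (r - (j : ℝ)) = 1) :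
    ∀ α β γ : MIdx d, ∃ C > (0 : ℝ), ∃ N' : ℕ,
      ∀ t ∈ Set.Icc (0 : ℝ) 1, ∀ j k : ℤ, ∀ a : Q d × Q d → ℂ, IsSymbol f m a →
        ∀ x : Q d × Q d × Q d,
          ‖mderiv3 α β γ (scaledAmp d f ψ t j k a) x‖
            ≤ C * symNorm f m N' a * brP x.2.1 ^ (m - (deg β : ℝ)) := by
  exact statement8_general d (fun r => one_pos.trans_le (hf.2.1 r)) hf.slowlyVarying m hψs hψc
    (Metric.isBounded_Icc 0 1)

end
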